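/- arXiv:1712.08407 — 8 statements merged into one kernel-verified Lean document; each statement's English description precedes it below -/
import Mathlib

section
/- Suppose the bipartite graph G has a perfect matching, and let γ be a positive integer. Then there exists a set T ⊆ E with |T| ≤ γ such that the graph (V, Ṽ, E ∖ T) has no perfect matching if and only if there exists a set T̃ ⊆ E_K with |T̃| ≤ γ such that B − T̃ has no perfect matching. (Paper's Theorem 1, combinatorial core of the NP-completeness reduction.) -/
namespace ResilientFeedback

/-- Vertices of the closed-loop system bipartite graph: `Sum.inl i` is `x_i`
(resp. `x'_i` on the left side), `Sum.inr (Sum.inl i)` is `u_i` (resp. `u'_i`),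
and `Sum.inr (Sum.inr i)` is `y_i` (resp. `y'_i`).  Indices are 1-based. -/
abbrev V3 : Type := ℕ ⊕ ℕ ⊕ ℕ

def xv (i : ℕ) : V3 := Sum.inl i
def uv (i : ℕ) : V3 := Sum.inr (Sum.inl i)
def yv (i : ℕ) : V3 := Sum.inr (Sum.inr i)

/-- `M` is a matching of the edge set `Ed`: a subset of `Ed` in which no two
distinct edges share an endpoint. -/
def IsMatching {α β : Type} (Ed M : Set (α × β)) : Prop :=
  M ⊆ Ed ∧ ∀ e ∈ M, ∀ f ∈ M, e ≠ f → e.1 ≠ f.1 ∧ e.2 ≠ f.2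

/-- A perfect matching of a bipartite graph with left vertex set `L`:
a matching covering every vertex of `L`. -/
def IsPerfectMatchingLeft {α β : Type} (L : Set α) (Ed M : Set (α × β)) : Prop :=
  IsMatching Ed M ∧ ∀ a ∈ L, ∃ b, (a, b) ∈ M

/-- A perfect matching of a bipartite graph with left vertex set `L` and right
vertex set `R` of equal size: a matching covering every vertex of `L` and of `R`. -/
def IsPerfectMatchingOn {α β : Type} (L : Set α) (R : Set β) (Ed M : Set (α × β)) : Prop :=
  IsMatching Ed M ∧ (∀ a ∈ L, ∃ b, (a, b) ∈ M) ∧ (∀ b ∈ R, ∃ a, (a, b) ∈ M)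

/-- The (left, and identically the right) vertex set of the closed-loop system
bipartite graph `B`: `x'_1, …, x'_{s+2}` (resp. `x_1,…,x_{s+2}`), `u'_1,…,u'_s`, `y'_1,…,y'_r`. -/
def vertsB (r s : ℕ) : Set V3 :=
  {v | (∃ i ∈ Set.Icc 1 (s + 2), v = xv i) ∨ (∃ i ∈ Set.Icc 1 s, v = uv i) ∨
       (∃ i ∈ Set.Icc 1 r, v = yv i)}

/-- The edges of the closed-loop system bipartite graph `B` built from the bipartite
graph `G = ({1,…,r}, {1,…,s}, E)`; a pair `(l, rgt)` is an edge from left vertex `l`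
to right vertex `rgt`. -/
def edgesB (r s : ℕ) (E : Set (ℕ × ℕ)) : Set (V3 × V3) :=
  {e | (∃ j ∈ Set.Icc 1 (s + 2), e = (xv 2, xv j)) ∨
       (∃ i ∈ Set.Icc 1 (s + 2), e = (xv i, xv 2)) ∨
       (∃ i ∈ Set.Icc 3 (s - r + 2), ∃ j ∈ Set.Icc 3 (s + 2), e = (xv i, xv j)) ∨
       (∃ i ∈ Set.Icc (s - r + 3) (s + 2), ∃ j ∈ Set.Icc 1 s, e = (xv i, uv j)) ∨
       (∃ i ∈ Set.Icc 1 r, ∃ j ∈ Set.Icc 3 (s + 2), e = (yv i, xv j)) ∨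
       (∃ i j, (j, i) ∈ E ∧ e = (uv i, yv j)) ∨
       (∃ i ∈ Set.Icc 1 s, e = (uv i, uv i)) ∨
       (∃ i ∈ Set.Icc 1 r, e = (yv i, yv i))}

/-- The feedback edges `E_K` of `B`: `u'_i — y_j` for exactly those pairs with
`(v_j, ṽ_i) ∈ E`. -/
def EKset (E : Set (ℕ × ℕ)) : Set (V3 × V3) :=
  {e | ∃ i j, (j, i) ∈ E ∧ e = (uv i, yv j)}


theorem matching_iff {α β : Type} (Ed M : Set (α × β)) : IsMatching Ed M ↔
    M ⊆ Ed ∧ (∀ a b c, (a, b) ∈ M → (a, c) ∈ M → b = c) ∧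
      (∀ a b c, (a, c) ∈ M → (b, c) ∈ M → a = b) := by
  unfold IsMatching
  constructor
  · rintro ⟨h, h2⟩
    refine ⟨h, fun a b c h3 h4 => ?_, fun a b c h3 h4 => ?_⟩
    · by_contra hne
      exact (h2 _ h3 _ h4 (by simpa using hne)).1 rfl
    · by_contra hne
      exact (h2 _ h3 _ h4 (by simpa using hne)).2 rfl
  · rintro ⟨h, h2, h3⟩
    refine ⟨h, ?_⟩
    rintro ⟨a, b⟩ he ⟨c, d⟩ hf hne
    constructor
    · rintro rfl
      exact hne (by rw [h2 _ _ _ he hf])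
    · rintro rfl
      exact hne (by rw [h3 _ _ _ he hf])

/-- From a perfect matching of `B - TB` to one of `G - T`. -/
theorem matching_of_B (r s : ℕ) (hrs : r ≤ s)
    (E T : Set (ℕ × ℕ)) (TB : Set (V3 × V3))
    (hT : ∀ i j, (j, i) ∈ T → (uv i, yv j) ∈ TB) (MB : Set (V3 × V3))
    (hMB : IsPerfectMatchingOn (vertsB r s) (vertsB r s) (edgesB r s E \ TB) MB) :
    ∃ M, IsPerfectMatchingLeft (Set.Icc 1 r) (E \ T) M := by
  obtain ⟨hm, hL, hR⟩ := hMB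
  rw [matching_iff] at hm
  obtain ⟨hsub, h1, h2⟩ := hm
  have hx1 : (xv 2, xv 1) ∈ MB := by
    obtain ⟨a, ha⟩ := hR (xv 1) (Or.inl ⟨1, ⟨le_refl _, by omega⟩, rfl⟩)
    have := (hsub ha).1
    simp only [edgesB, Set.mem_ofPred_eq, Prod.mk.injEq, xv, uv, yv, Set.mem_Icc] at this
    rcases this with ⟨j, hj, h, hB⟩ | ⟨j, hj, h, hB⟩ | ⟨i, hi, j, hj, h, hB⟩ |
      ⟨i, hi, j, hj, h, hB⟩ | ⟨i, hi, j, hj, h, hB⟩ | ⟨i, j, hj, h, hB⟩ |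
      ⟨j, hj, h, hB⟩ | ⟨j, hj, h, hB⟩ <;> simp at hB
    · subst h; exact ha
    · omega
    · omega
  -- each `x_j` with `3 ≤ j` is matched to a vertex of the following finite set
  let S : Finset V3 := (Finset.Icc 3 (s - r + 2)).image xv ∪ (Finset.Icc 1 r).image yv
  have hS : S.card ≤ s := by
    refine (Finset.card_union_le _ _).trans ?_
    refine (Nat.add_le_add Finset.card_image_le Finset.card_image_le).trans ?_
    simp; omega
  have hex : ∀ j, ∃ a, j ∈ Finset.Icc 3 (s + 2) → a ∈ S ∧ (a, xv j) ∈ MB := by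
    intro j
    by_cases hj : j ∈ Finset.Icc 3 (s + 2)
    swap
    · exact ⟨xv 1, fun h => absurd h hj⟩
    have hjB := Finset.mem_Icc.1 hj
    obtain ⟨a, ha⟩ := hR (xv j) (Or.inl ⟨j, ⟨by omega, by omega⟩, rfl⟩)
    refine ⟨a, fun _ => ⟨?_, ha⟩⟩
    have := (hsub ha).1
    simp only [edgesB, Set.mem_ofPred_eq, Prod.mk.injEq] at this
    rcases this with ⟨k, hk, h, hB⟩ | ⟨k, hk, h, hB⟩ | ⟨i, hi, k, hk, h, hB⟩ |
      ⟨i, hi, k, hk, h, hB⟩ | ⟨i, hi, k, hk, h, hB⟩ | ⟨i, k, hk, h, hB⟩ |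
      ⟨k, hk, h, hB⟩ | ⟨k, hk, h, hB⟩
    · subst h
      have := h1 _ _ _ hx1 ha
      simp [xv] at this
      omega
    · simp [xv] at hB
      omega
    · subst h
      exact Finset.mem_union_left _ (Finset.mem_image_of_mem _ (Finset.mem_Icc.2 hi))
    · simp [xv, uv] at hB
    · subst h
      exact Finset.mem_union_right _ (Finset.mem_image_of_mem _ (Finset.mem_Icc.2 hi))
    · simp [xv, yv] at hB
    · simp [xv, uv] at hB
    · simp [xv, yv] at hB
  choose g hg using hex
  have hinj : Set.InjOn g (Finset.Icc 3 (s + 2)) := by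
    intro a ha b hb hab
    have h3 := (hg a ha).2
    rw [hab] at h3
    have := h1 _ _ _ h3 (hg b hb).2
    simpa [xv] using this
  have himg : (Finset.Icc 3 (s + 2)).image g = S := by
    apply Finset.eq_of_subset_of_card_le
    · intro a ha
      obtain ⟨j, hj, rfl⟩ := Finset.mem_image.1 ha
      exact (hg j hj).1
    · rw [Finset.card_image_of_injOn hinj]
      simpa using hS
  have hy : ∀ i ∈ Set.Icc 1 r, ∃ j, (yv i, xv j) ∈ MB := by
    intro i hi
    have : yv i ∈ S := Finset.mem_union_right _ (Finset.mem_image_of_mem _ (Finset.mem_Icc.2 hi))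
    rw [← himg] at this
    obtain ⟨j, hj, hji⟩ := Finset.mem_image.1 this
    exact ⟨j, hji ▸ (hg j hj).2⟩
  refine ⟨{p | (uv p.2, yv p.1) ∈ MB}, ?_, ?_⟩
  · rw [matching_iff]
    refine ⟨?_, ?_, ?_⟩
    · rintro ⟨j, i⟩ h
      have h3 := hsub h
      refine ⟨?_, fun h4 => h3.2 (hT _ _ h4)⟩
      have := h3.1
      simp [edgesB, xv, yv, uv] at this
      exact this
    · intro a b c h3 h4
      simpa [uv] using h2 _ _ _ h3 h4
    · intro a b c h3 h4
      simpa [yv] using h1 _ _ _ h3 h4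
  · intro j hj
    obtain ⟨a, ha⟩ := hR (yv j) (Or.inr (Or.inr ⟨j, hj, rfl⟩))
    obtain ⟨k, hk⟩ := hy j hj
    have := (hsub ha).1
    simp only [edgesB, Set.mem_ofPred_eq, Prod.mk.injEq] at this
    rcases this with ⟨k, hk, h, hB⟩ | ⟨k, hk, h, hB⟩ | ⟨i, hi, k, hk, h, hB⟩ |
      ⟨i, hi, k, hk, h, hB⟩ | ⟨i, hi, k, hk, h, hB⟩ | ⟨i, k, hk, h, hB⟩ |
      ⟨k, hk, h, hB⟩ | ⟨i, hi, h, hB⟩ <;> simp [xv, uv, yv] at hB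
    · subst h; exact ⟨i, ha⟩
    · subst hB; subst h
      have := h1 _ _ _ ha hk
      simp [xv, yv] at this

/-- From a perfect matching of `G - T` to one of `B - TB`. -/
theorem matching_to_B (r s : ℕ) (hrs : r ≤ s)
    (E T : Set (ℕ × ℕ)) (hE : E ⊆ Set.Icc 1 r ×ˢ Set.Icc 1 s) (TB : Set (V3 × V3))
    (hT : ∀ e ∈ TB, ∃ i j, (j, i) ∈ T ∧ e = (uv i, yv j)) (M : Set (ℕ × ℕ))
    (hM : IsPerfectMatchingLeft (Set.Icc 1 r) (E \ T) M) :
    ∃ MB, IsPerfectMatchingOn (vertsB r s) (vertsB r s) (edgesB r s E \ TB) MB := by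
  obtain ⟨hm, hL⟩ := hM
  rw [matching_iff] at hm
  obtain ⟨hsub, h1, h2⟩ := hm
  have hb : ∀ j i, (j, i) ∈ M → 1 ≤ j ∧ j ≤ r ∧ 1 ≤ i ∧ i ≤ s := by
    intro j i h
    have := hE (hsub h).1
    simp at this
    omega
  refine ⟨{e | e = (xv 1, xv 2) ∨ e = (xv 2, xv 1) ∨
    (∃ i, 3 ≤ i ∧ i ≤ s - r + 2 ∧ e = (xv i, xv i)) ∨
    (∃ i, 1 ≤ i ∧ i ≤ r ∧ e = (yv i, xv (s - r + 2 + i))) ∨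
    (∃ i j, (j, i) ∈ M ∧ e = (uv i, yv j)) ∨
    (∃ i, 1 ≤ i ∧ i ≤ s ∧ (∀ j, (j, i) ∉ M) ∧ e = (uv i, uv i)) ∨
    (∃ i j, (j, i) ∈ M ∧ e = (xv (s - r + 2 + j), uv i))}, ?_, ?_, ?_⟩
  · rw [matching_iff]
    refine ⟨?_, ?_, ?_⟩
    · rintro e he
      refine ⟨?_, fun h => ?_⟩
      · simp only [edgesB, Set.mem_ofPred_eq, Set.mem_Icc]
        rcases he with rfl | rfl | ⟨i, hi, hiB, rfl⟩ | ⟨i, hi, hiB, rfl⟩ | ⟨i, j, h, rfl⟩ |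
          ⟨i, hi, hiB, h, rfl⟩ | ⟨i, j, h, rfl⟩
        · exact Or.inr (Or.inl ⟨1, by omega, rfl⟩)
        · exact Or.inl ⟨1, by omega, rfl⟩
        · exact Or.inr (Or.inr (Or.inl ⟨i, by omega, i, by omega, rfl⟩))
        · exact Or.inr (Or.inr (Or.inr (Or.inr (Or.inl ⟨i, by omega, _, by omega, rfl⟩))))
        · exact Or.inr (Or.inr (Or.inr (Or.inr (Or.inr (Or.inl ⟨i, j, (hsub h).1, rfl⟩)))))
        · exact Or.inr (Or.inr (Or.inr (Or.inr (Or.inr (Or.inr (Or.inl ⟨i, by omega, rfl⟩))))))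
        · have := hb _ _ h
          exact Or.inr (Or.inr (Or.inr (Or.inl ⟨_, by omega, i, by omega, rfl⟩)))
      · obtain ⟨i, j, hij, rfl⟩ := hT _ h
        simp [xv, yv, uv] at he
        exact (hsub he).2 hij
    · intro a b c hab hac
      simp only [Set.mem_ofPred_eq, Prod.mk.injEq, xv, uv, yv] at hab hac
      rcases a with a | a | a <;> rcases b with b | b | b <;> rcases c with c | c | c <;>
        simp at hab hac ⊢ <;> grind
    · intro a b c hab hac
      simp only [Set.mem_ofPred_eq, Prod.mk.injEq, xv, uv, yv] at hab hac
      rcases a with a | a | a <;> rcases b with b | b | b <;> rcases c with c | c | c <;>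
        simp at hab hac ⊢ <;> grind
  · rintro a (⟨i, ⟨hi, hiB⟩, rfl⟩ | ⟨i, ⟨hi, hiB⟩, rfl⟩ | ⟨i, ⟨hi, hiB⟩, rfl⟩)
    · by_cases h : i = 1
      · subst h; exact ⟨xv 2, Or.inl rfl⟩
      by_cases h : i = 2
      · subst h; exact ⟨xv 1, Or.inr (Or.inl rfl)⟩
      by_cases h : i ≤ s - r + 2
      · exact ⟨xv i, Or.inr (Or.inr (Or.inl ⟨i, by omega, h, rfl⟩))⟩
      obtain ⟨j, rfl⟩ : ∃ j, i = s - r + 2 + j := ⟨i - (s - r + 2), by omega⟩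
      obtain ⟨k, hk⟩ := hL j ⟨by omega, by omega⟩
      exact ⟨uv k, Or.inr (Or.inr (Or.inr (Or.inr (Or.inr (Or.inr ⟨k, j, hk, rfl⟩)))))⟩
    · by_cases h : ∃ j, (j, i) ∈ M
      · obtain ⟨j, h⟩ := h
        exact ⟨yv j, Or.inr (Or.inr (Or.inr (Or.inr (Or.inl ⟨i, j, h, rfl⟩))))⟩
      · push Not at h
        exact ⟨uv i, Or.inr (Or.inr (Or.inr (Or.inr (Or.inr (Or.inl ⟨i, hi, hiB, h, rfl⟩)))))⟩
    · exact ⟨_, Or.inr (Or.inr (Or.inr (Or.inl ⟨i, hi, hiB, rfl⟩)))⟩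
  · rintro a (⟨i, ⟨hi, hiB⟩, rfl⟩ | ⟨i, ⟨hi, hiB⟩, rfl⟩ | ⟨i, ⟨hi, hiB⟩, rfl⟩)
    · by_cases h : i = 1
      · subst h; exact ⟨xv 2, Or.inr (Or.inl rfl)⟩
      by_cases h : i = 2
      · subst h; exact ⟨xv 1, Or.inl rfl⟩
      by_cases h : i ≤ s - r + 2
      · exact ⟨xv i, Or.inr (Or.inr (Or.inl ⟨i, by omega, h, rfl⟩))⟩
      obtain ⟨j, rfl⟩ : ∃ j, i = s - r + 2 + j := ⟨i - (s - r + 2), by omega⟩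
      exact ⟨yv j, Or.inr (Or.inr (Or.inr (Or.inl ⟨j, by omega, by omega, rfl⟩)))⟩
    · by_cases h : ∃ j, (j, i) ∈ M
      · obtain ⟨j, h⟩ := h
        exact ⟨_, Or.inr (Or.inr (Or.inr (Or.inr (Or.inr (Or.inr ⟨i, j, h, rfl⟩)))))⟩
      · push Not at h
        exact ⟨uv i, Or.inr (Or.inr (Or.inr (Or.inr (Or.inr (Or.inl ⟨i, hi, hiB, h, rfl⟩)))))⟩
    · obtain ⟨k, hk⟩ := hL i ⟨hi, hiB⟩
      exact ⟨uv k, Or.inr (Or.inr (Or.inr (Or.inr (Or.inl ⟨k, i, hk, rfl⟩))))⟩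

/-- The edge of `B` corresponding to an edge of `G`. -/
def fbEdge (p : ℕ × ℕ) : V3 × V3 := (uv p.2, yv p.1)

theorem fbEdge_injective : Function.Injective fbEdge := by
  rintro ⟨a, b⟩ ⟨c, d⟩ h
  simp [fbEdge, uv, yv] at h
  simp [h]

/-- paper's Theorem 1, combinatorial core.  Suppose the bipartite
graph `G = ({1,…,r}, {1,…,s}, E)` has a perfect matching and `γ` is a positive
integer.  Then there is a set `T ⊆ E` with `|T| ≤ γ` such that `(V, Ṽ, E \ T)` has
no perfect matching iff there is a set `T̃ ⊆ E_K` with `|T̃| ≤ γ` such that `B − T̃`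
has no perfect matching. -/
theorem blocker_correspondence (r s γ : ℕ) (hr : 0 < r) (hrs : r ≤ s) (hγ : 0 < γ)
    (E : Set (ℕ × ℕ)) (hE : E ⊆ Set.Icc 1 r ×ˢ Set.Icc 1 s)
    (hG : ∃ M, IsPerfectMatchingLeft (Set.Icc 1 r) E M) :
    (∃ T ⊆ E, T.ncard ≤ γ ∧
        ¬ ∃ M, IsPerfectMatchingLeft (Set.Icc 1 r) (E \ T) M) ↔
    (∃ T ⊆ EKset E, T.ncard ≤ γ ∧
        ¬ ∃ M, IsPerfectMatchingOn (vertsB r s) (vertsB r s) (edgesB r s E \ T) M) := by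
  constructor
  · rintro ⟨T, hTE, hc, hn⟩
    refine ⟨Set.image fbEdge T, ?_, ?_, ?_⟩
    · rintro _ ⟨p, hp, rfl⟩
      exact ⟨p.2, p.1, hTE hp, rfl⟩
    · rwa [Set.ncard_image_of_injective _ fbEdge_injective]
    · rintro ⟨MB, hMB⟩
      exact hn (matching_of_B r s hrs E T _ (fun i j h => Set.mem_image_of_mem fbEdge h) MB hMB)
  · rintro ⟨TB, hTE, hc, hn⟩
    have himg : Set.image fbEdge (Set.preimage fbEdge TB) = TB := by
      apply Set.image_preimage_eq_of_subset
      intro e he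
      obtain ⟨i, j, _, rfl⟩ := hTE he
      exact ⟨(j, i), rfl⟩
    refine ⟨Set.preimage fbEdge TB, ?_, ?_, ?_⟩
    · rintro ⟨j, i⟩ hp
      obtain ⟨iB, jB, h, hB⟩ := hTE hp
      have : ((j, i) : ℕ × ℕ) = (jB, iB) := fbEdge_injective hB
      rwa [this]
    · rwa [← Set.ncard_image_of_injective _ fbEdge_injective, himg]
    · rintro ⟨M, hM⟩
      refine hn (matching_to_B r s hrs E _ hE TB ?_ M hM)
      intro e he
      obtain ⟨i, j, _, rfl⟩ := hTE he
      exact ⟨i, j, he, rfl⟩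

end ResilientFeedback
end

section
/- If the bipartite graph G has a perfect matching, then the closed-loop system bipartite graph B has a perfect matching. (Paper's Lemma 1.) -/
namespace ResilientFeedback

/-- paper's Lemma 1.  If the bipartite graph `G` has a perfect
matching, then the closed-loop system bipartite graph `B` has a perfect matching. -/
theorem B_has_perfect_matching (r s : ℕ) (hr : 0 < r) (hrs : r ≤ s)
    (E : Set (ℕ × ℕ)) (hE : E ⊆ Set.Icc 1 r ×ˢ Set.Icc 1 s)
    (hG : ∃ M, IsPerfectMatchingLeft (Set.Icc 1 r) E M) :
    ∃ M, IsPerfectMatchingOn (vertsB r s) (vertsB r s) (edgesB r s E) M := by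
  obtain ⟨M0, ⟨hsub, hinj⟩, hcov⟩ := hG
  have hex : ∀ a : ℕ, ∃ b, a ∈ Set.Icc 1 r → (a, b) ∈ M0 := by
    intro a
    by_cases h : a ∈ Set.Icc 1 r
    · obtain ⟨b, hb⟩ := hcov a h
      exact ⟨b, fun _ => hb⟩
    · exact ⟨0, fun h' => absurd h' h⟩
  choose f hf using hex
  have hfE : ∀ k, 1 ≤ k → k ≤ r → (k, f k) ∈ E := fun k h1 h2 => hsub (hf k ⟨h1, h2⟩)
  have hfb : ∀ k, 1 ≤ k → k ≤ r → 1 ≤ f k ∧ f k ≤ s := fun k h1 h2 => (hE (hfE k h1 h2)).2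
  have hfi : ∀ k l, 1 ≤ k → k ≤ r → 1 ≤ l → l ≤ r → f k = f l → k = l := by
    intro k l h1 h2 h3 h4 h
    by_contra hne
    exact (hinj _ (hf k ⟨h1, h2⟩) _ (hf l ⟨h3, h4⟩) (by simp [hne])).2 h
  clear hsub hinj hcov hf
  obtain ⟨d, rfl⟩ := Nat.exists_eq_add_of_le hrs
  have hd : r + d - r = d := by omega
  let M : Set (V3 × V3) := {e | e = (xv 1, xv 2) ∨ e = (xv 2, xv 1) ∨
    (∃ i, 3 ≤ i ∧ i ≤ d + 2 ∧ e = (xv i, xv i)) ∨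
    (∃ k, 1 ≤ k ∧ k ≤ r ∧ e = (yv k, xv (d + 2 + k))) ∨
    (∃ k, 1 ≤ k ∧ k ≤ r ∧ e = (xv (d + 2 + k), uv (f k))) ∨
    (∃ k, 1 ≤ k ∧ k ≤ r ∧ e = (uv (f k), yv k)) ∨
    (∃ i, 1 ≤ i ∧ i ≤ r + d ∧ (∀ k, 1 ≤ k → k ≤ r → f k ≠ i) ∧ e = (uv i, uv i))}
  refine ⟨M, ⟨?_, ?_⟩, ?_, ?_⟩
  · rintro e (rfl | rfl | ⟨i, h1, h2, rfl⟩ | ⟨k, h1, h2, rfl⟩ | ⟨k, h1, h2, rfl⟩ |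
      ⟨k, h1, h2, rfl⟩ | ⟨i, h1, h2, h3, rfl⟩)
    · exact Or.inr (Or.inl ⟨1, ⟨by omega, by omega⟩, rfl⟩)
    · exact Or.inl ⟨1, ⟨by omega, by omega⟩, rfl⟩
    · exact Or.inr (Or.inr (Or.inl ⟨i, ⟨by omega, by omega⟩, i, ⟨by omega, by omega⟩, rfl⟩))
    · exact Or.inr (Or.inr (Or.inr (Or.inr (Or.inl
        ⟨k, ⟨h1, h2⟩, d + 2 + k, ⟨by omega, by omega⟩, rfl⟩))))
    · exact Or.inr (Or.inr (Or.inr (Or.inl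
        ⟨d + 2 + k, ⟨by omega, by omega⟩, f k, hfb k h1 h2, rfl⟩)))
    · exact Or.inr (Or.inr (Or.inr (Or.inr (Or.inr (Or.inl
        ⟨f k, k, hfE k h1 h2, rfl⟩)))))
    · exact Or.inr (Or.inr (Or.inr (Or.inr (Or.inr (Or.inr (Or.inl
        ⟨i, ⟨h1, h2⟩, rfl⟩))))))
  · rintro e (rfl | rfl | ⟨i, h1, h2, rfl⟩ | ⟨k, h1, h2, rfl⟩ | ⟨k, h1, h2, rfl⟩ |
      ⟨k, h1, h2, rfl⟩ | ⟨i, h1, h2, h3, rfl⟩) e'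
      (rfl | rfl | ⟨i', h1', h2', rfl⟩ | ⟨k', h1', h2', rfl⟩ | ⟨k', h1', h2', rfl⟩ |
      ⟨k', h1', h2', rfl⟩ | ⟨i', h1', h2', h3', rfl⟩) <;>
    simp only [xv, uv, yv, ne_eq, Prod.mk.injEq, Sum.inl.injEq, Sum.inr.injEq, reduceCtorEq,
      not_false_eq_true, and_true, true_and, and_self, not_true_eq_false, false_and, and_false] <;>
    grind
  · rintro a (⟨i, ⟨h1, h2⟩, rfl⟩ | ⟨i, ⟨h1, h2⟩, rfl⟩ | ⟨i, ⟨h1, h2⟩, rfl⟩)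
    · by_cases c1 : i = 1
      · subst c1; exact ⟨xv 2, Or.inl rfl⟩
      by_cases c2 : i = 2
      · subst c2; exact ⟨xv 1, Or.inr (Or.inl rfl)⟩
      by_cases c3 : i ≤ d + 2
      · exact ⟨xv i, Or.inr (Or.inr (Or.inl ⟨i, by omega, c3, rfl⟩))⟩
      · obtain ⟨k, rfl⟩ := Nat.exists_eq_add_of_le (show d + 2 ≤ i by omega)
        exact ⟨uv (f k), Or.inr (Or.inr (Or.inr (Or.inr (Or.inl
          ⟨k, by omega, by omega, rfl⟩))))⟩
    · by_cases c : ∃ k, 1 ≤ k ∧ k ≤ r ∧ f k = i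
      · obtain ⟨k, k1, k2, rfl⟩ := c
        exact ⟨yv k, Or.inr (Or.inr (Or.inr (Or.inr (Or.inr (Or.inl ⟨k, k1, k2, rfl⟩)))))⟩
      · exact ⟨uv i, Or.inr (Or.inr (Or.inr (Or.inr (Or.inr (Or.inr
          ⟨i, h1, h2, fun k k1 k2 h => c ⟨k, k1, k2, h⟩, rfl⟩)))))⟩
    · exact ⟨xv (d + 2 + i), Or.inr (Or.inr (Or.inr (Or.inl ⟨i, h1, h2, rfl⟩)))⟩
  · rintro a (⟨i, ⟨h1, h2⟩, rfl⟩ | ⟨i, ⟨h1, h2⟩, rfl⟩ | ⟨i, ⟨h1, h2⟩, rfl⟩)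
    · by_cases c1 : i = 1
      · subst c1; exact ⟨xv 2, Or.inr (Or.inl rfl)⟩
      by_cases c2 : i = 2
      · subst c2; exact ⟨xv 1, Or.inl rfl⟩
      by_cases c3 : i ≤ d + 2
      · exact ⟨xv i, Or.inr (Or.inr (Or.inl ⟨i, by omega, c3, rfl⟩))⟩
      · obtain ⟨k, rfl⟩ := Nat.exists_eq_add_of_le (show d + 2 ≤ i by omega)
        exact ⟨yv k, Or.inr (Or.inr (Or.inr (Or.inl ⟨k, by omega, by omega, rfl⟩)))⟩
    · by_cases c : ∃ k, 1 ≤ k ∧ k ≤ r ∧ f k = i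
      · obtain ⟨k, k1, k2, rfl⟩ := c
        exact ⟨xv (d + 2 + k), Or.inr (Or.inr (Or.inr (Or.inr (Or.inl ⟨k, k1, k2, rfl⟩))))⟩
      · exact ⟨uv i, Or.inr (Or.inr (Or.inr (Or.inr (Or.inr (Or.inr
          ⟨i, h1, h2, fun k k1 k2 h => c ⟨k, k1, k2, h⟩, rfl⟩)))))⟩
    · exact ⟨uv (f i), Or.inr (Or.inr (Or.inr (Or.inr (Or.inr (Or.inl ⟨i, h1, h2, rfl⟩)))))⟩

end ResilientFeedback
end

section
/- Every perfect matching M_B of the closed-loop system bipartite graph B satisfies: M_B ∩ E_K has cardinality exactly r, it matches all of the vertices y_1,…,y_r, and the edge set {(v_j, ṽ_i) : the edge u'_i—y_j belongs to M_B ∩ E_K} is a perfect matching of G. (Structural claim proved in the only-if part of Theorem 1.) -/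
namespace ResilientFeedback

/-- structural claim from the only-if part of Theorem 1.  Every
perfect matching `M_B` of `B` satisfies: `M_B ∩ E_K` has cardinality exactly `r`,
it matches all of the vertices `y_1, …, y_r`, and the corresponding edge set
`{(v_j, ṽ_i) : u'_i—y_j ∈ M_B ∩ E_K}` is a perfect matching of `G`. -/
theorem perfect_matching_structure (r s : ℕ) (hr : 0 < r) (hrs : r ≤ s)
    (E : Set (ℕ × ℕ)) (hE : E ⊆ Set.Icc 1 r ×ˢ Set.Icc 1 s)
    (MB : Set (V3 × V3))
    (hMB : IsPerfectMatchingOn (vertsB r s) (vertsB r s) (edgesB r s E) MB) :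
    (MB ∩ EKset E).ncard = r ∧
    (∀ j ∈ Set.Icc 1 r, ∃ i, (uv i, yv j) ∈ MB ∩ EKset E) ∧
    IsPerfectMatchingLeft (Set.Icc 1 r) E
      {p : ℕ × ℕ | (uv p.2, yv p.1) ∈ MB ∩ EKset E} := by
  obtain ⟨⟨hsub, hmat⟩, hL, hR⟩ := hMB
  have hfst : ∀ a b c, (a, b) ∈ MB → (a, c) ∈ MB → b = c := by
    intro a b c h1 h2
    by_contra hne
    exact (hmat _ h1 _ h2 (by simp [hne])).1 rfl
  have hsnd : ∀ a b c, (a, c) ∈ MB → (b, c) ∈ MB → a = b := by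
    intro a b c h1 h2
    by_contra hne
    exact (hmat _ h1 _ h2 (by simp [hne])).2 rfl
  -- `x_1` is only adjacent to left x_2
  have h21 : (xv 2, xv 1) ∈ MB := by
    obtain ⟨a, ha⟩ := hR (xv 1) (Or.inl ⟨1, by simp, rfl⟩)
    have h := hsub ha
    simp only [edgesB, xv, uv, yv, Set.mem_ofPred_eq, Prod.mk.injEq, Set.mem_Icc] at h
    have : a = xv 2 := by
      rcases h with ⟨j, hj, h1, h2⟩ | ⟨j, hj, h1, h2⟩ | ⟨i, hi, j, hj, h1, h2⟩ |
        ⟨i, hi, j, hj, h1, h2⟩ | ⟨i, hi, j, hj, h1, h2⟩ | ⟨i, j, hj, h1, h2⟩ |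
        ⟨j, hj, h1, h2⟩ | ⟨j, hj, h1, h2⟩ <;> simp at h2
      · exact h1
      · omega
      · omega
    rwa [this] at ha
  -- left x_1 is only adjacent to `x_2`
  have h12 : (xv 1, xv 2) ∈ MB := by
    obtain ⟨a, ha⟩ := hL (xv 1) (Or.inl ⟨1, by simp, rfl⟩)
    have h := hsub ha
    simp only [edgesB, xv, uv, yv, Set.mem_ofPred_eq, Prod.mk.injEq, Set.mem_Icc] at h
    have : a = xv 2 := by
      rcases h with ⟨j, hj, h1, h2⟩ | ⟨j, hj, h1, h2⟩ | ⟨i, hi, j, hj, h1, h2⟩ |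
        ⟨i, hi, j, hj, h1, h2⟩ | ⟨i, hi, j, hj, h1, h2⟩ | ⟨i, j, hj, h1, h2⟩ |
        ⟨j, hj, h1, h2⟩ | ⟨j, hj, h1, h2⟩ <;> simp at h1
      · exact h2
      · omega
      · omega
    rwa [this] at ha
  have hex : ∀ j, ∃ a, j ∈ Finset.Icc 3 (s + 2) → (a, xv j) ∈ MB := by
    intro j
    by_cases hj : j ∈ Finset.Icc 3 (s + 2)
    · rw [Finset.mem_Icc] at hj
      obtain ⟨a, ha⟩ := hR (xv j) (Or.inl ⟨j, ⟨by omega, hj.2⟩, rfl⟩)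
      exact ⟨a, fun _ => ha⟩
    · exact ⟨xv 0, fun h => absurd h hj⟩
  choose f hf using hex
  let T : Finset V3 := (Finset.Icc 3 (s - r + 2)).image xv ∪ (Finset.Icc 1 r).image yv
  have hTcard : T.card ≤ s := by
    refine (Finset.card_union_le _ _).trans ?_
    have h1 := Finset.card_image_le (s := Finset.Icc 3 (s - r + 2)) (f := xv)
    have h2 := Finset.card_image_le (s := Finset.Icc 1 r) (f := yv)
    simp only [Nat.card_Icc] at h1 h2
    omega
  have hfT : (Finset.Icc 3 (s + 2)).image f ⊆ T := by
    intro a ha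
    obtain ⟨k, hk, rfl⟩ := Finset.mem_image.1 ha
    have hm := hf k hk
    have h := hsub hm
    rw [Finset.mem_Icc] at hk
    simp only [edgesB, Set.mem_ofPred_eq, Prod.mk.injEq, Set.mem_Icc] at h
    rcases h with ⟨j, hj, h1, h2⟩ | ⟨j, hj, h1, h2⟩ | ⟨i, hi, j, hj, h1, h2⟩ |
      ⟨i, hi, j, hj, h1, h2⟩ | ⟨i, hi, j, hj, h1, h2⟩ | ⟨i, j, hj, h1, h2⟩ |
      ⟨j, hj, h1, h2⟩ | ⟨j, hj, h1, h2⟩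
    · rw [h1] at hm
      have := hfst _ _ _ hm h21
      simp [xv] at this
      omega
    · have hk2 : k = 2 := by simpa [xv] using h2
      omega
    · rw [h1]
      exact Finset.mem_union_left _ (Finset.mem_image_of_mem _ (Finset.mem_Icc.2 hi))
    · simp [xv, uv] at h2
    · rw [h1]
      exact Finset.mem_union_right _ (Finset.mem_image_of_mem _ (Finset.mem_Icc.2 hi))
    · simp [xv, yv] at h2
    · simp [xv, uv] at h2
    · simp [xv, yv] at h2
  have hinj : Set.InjOn f (Finset.Icc 3 (s + 2) : Finset ℕ) := by
    intro a ha b hb hab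
    have h1 := hf a ha
    have h2 := hf b hb
    rw [hab] at h1
    simpa [xv] using hfst _ _ _ h1 h2
  have himg : (Finset.Icc 3 (s + 2)).image f = T := by
    apply Finset.eq_of_subset_of_card_le hfT
    rw [Finset.card_image_of_injOn hinj, Nat.card_Icc]
    omega
  -- every left y_i is matched to some `x_j`
  have hyx : ∀ i ∈ Set.Icc 1 r, ∃ j, (yv i, xv j) ∈ MB := by
    intro i hi
    have : yv i ∈ T :=
      Finset.mem_union_right _ (Finset.mem_image_of_mem _ (Finset.mem_Icc.2 hi))
    rw [← himg] at this
    obtain ⟨k, hk, hk2⟩ := Finset.mem_image.1 this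
    exact ⟨k, hk2 ▸ hf k hk⟩
  have hyu : ∀ j ∈ Set.Icc 1 r, ∃ i, (uv i, yv j) ∈ MB ∩ EKset E := by
    intro k hk
    obtain ⟨a, ha⟩ := hR (yv k) (Or.inr (Or.inr ⟨k, hk, rfl⟩))
    have h := hsub ha
    simp only [edgesB, Set.mem_ofPred_eq, Prod.mk.injEq] at h
    rcases h with ⟨j, hj, h1, h2⟩ | ⟨j, hj, h1, h2⟩ | ⟨i, hi, j, hj, h1, h2⟩ |
      ⟨i, hi, j, hj, h1, h2⟩ | ⟨i, hi, j, hj, h1, h2⟩ | ⟨i, j, hj, h1, h2⟩ |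
      ⟨j, hj, h1, h2⟩ | ⟨j, hj, h1, h2⟩
    · simp [xv, yv] at h2
    · simp [xv, yv] at h2
    · simp [xv, yv] at h2
    · simp [uv, yv] at h2
    · simp [xv, yv] at h2
    · rw [h1] at ha
      exact ⟨i, ha, i, j, hj, by rw [h2]⟩
    · simp [uv, yv] at h2
    · rw [← h2] at h1
      rw [h1] at ha
      obtain ⟨m, hm⟩ := hyx k hk
      have := hfst _ _ _ ha hm
      simp [xv, yv] at this
  have hEK : ∀ i j, (uv i, yv j) ∈ EKset E → (j, i) ∈ E := by
    rintro i j ⟨i₂, j₂, h, he⟩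
    simp only [uv, yv, Prod.mk.injEq, Sum.inr.injEq, Sum.inl.injEq] at he
    rwa [he.1, he.2]
  refine ⟨?_, hyu, ⟨?_, ?_⟩, hyu⟩
  · choose! g hg using hyu
    have himg2 : MB ∩ EKset E = (fun j => (uv (g j), yv j)) '' Set.Icc 1 r := by
      apply Set.Subset.antisymm
      · rintro e ⟨he, i, j, hij, rfl⟩
        have hj : j ∈ Set.Icc 1 r := (hE hij).1
        exact ⟨j, hj, by simp only [hsnd _ _ _ he (hg j hj).1]⟩
      · rintro e ⟨j, hj, rfl⟩
        exact hg j hj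
    rw [himg2, Set.ncard_image_of_injective]
    · rw [← Finset.coe_Icc, Set.ncard_coe_finset]
      simp
    · intro a b hab
      simpa [yv] using (Prod.mk.inj hab).2
  · rintro ⟨j, i⟩ h
    exact hEK i j h.2
  · rintro ⟨j, i⟩ h ⟨j₂, i₂⟩ h₂ hne
    refine ⟨?_, ?_⟩
    · rintro (rfl : j = j₂)
      apply hne
      have := hsnd _ _ _ h.1 h₂.1
      simp only [uv, Sum.inr.injEq, Sum.inl.injEq] at this
      rw [this]
    · rintro (rfl : i = i₂)
      apply hne
      have := hfst _ _ _ h.1 h₂.1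
      simp only [yv, Sum.inr.injEq] at this
      rw [this]

end ResilientFeedback
end

section
/- The closed-loop system bipartite graph B has a perfect matching if and only if the bipartite graph G has a perfect matching. (Combination of Lemma 1 with the matching correspondence established in the proof of Theorem 1.) -/
namespace ResilientFeedback

/-- combination of Lemma 1 with the matching correspondence in
Theorem 1.  The closed-loop system bipartite graph `B` has a perfect matching iff
the bipartite graph `G` has a perfect matching. -/
theorem B_pm_iff_G_pm (r s : ℕ) (hr : 0 < r) (hrs : r ≤ s)
    (E : Set (ℕ × ℕ)) (hE : E ⊆ Set.Icc 1 r ×ˢ Set.Icc 1 s) :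
    (∃ M, IsPerfectMatchingOn (vertsB r s) (vertsB r s) (edgesB r s E) M) ↔
    (∃ M, IsPerfectMatchingLeft (Set.Icc 1 r) E M) := by
  constructor
  · rintro ⟨M, ⟨hsub, hinj⟩, hL, hR⟩
    -- uniqueness of partners
    have hl : ∀ a b c, (a, b) ∈ M → (a, c) ∈ M → b = c := by
      intro a b c h1 h2
      by_contra hne
      exact (hinj _ h1 _ h2 (by simpa using hne)).1 rfl
    have hrr : ∀ a b c, (b, a) ∈ M → (c, a) ∈ M → b = c := by
      intro a b c h1 h2
      by_contra hne
      exact (hinj _ h1 _ h2 (by simpa using hne)).2 rfl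
    have h1 : (xv 2, xv 1) ∈ M := by
      obtain ⟨a, ha⟩ := hR (xv 1) (Or.inl ⟨1, by simp, rfl⟩)
      have := hsub ha
      simp only [edgesB, Set.mem_setOf_eq, Prod.mk.injEq, xv, uv, yv, Set.mem_Icc] at this
      have h : a = xv 2 := by
        simp only [xv]
        grind
      rwa [h] at ha
    have hkey : ∀ k ∈ Set.Icc 1 r, (yv k, yv k) ∉ M := by
      intro k hk hkM
      have hex : ∀ j ∈ Finset.Icc 3 (s + 2), ∃ a, (a, xv j) ∈ M ∧
          a ∈ (Finset.Icc 3 (s - r + 2)).image xv ∪ ((Finset.Icc 1 r).erase k).image yv := by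
        intro j hj
        rw [Finset.mem_Icc] at hj
        obtain ⟨a, ha⟩ := hR (xv j) (Or.inl ⟨j, by simp; omega, rfl⟩)
        refine ⟨a, ha, ?_⟩
        have h2 : a ≠ xv 2 := by
          rintro rfl
          have := hl _ _ _ ha h1
          simp only [xv, Sum.inl.injEq] at this
          omega
        have h3 : a ≠ yv k := by
          rintro rfl
          have := hl _ _ _ ha hkM
          simp [xv, yv] at this
        have := hsub ha
        simp only [edgesB, Set.mem_setOf_eq, Prod.mk.injEq, Set.mem_Icc] at this
        simp only [Finset.mem_union, Finset.mem_image, Finset.mem_erase, Finset.mem_Icc]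
        simp only [xv, uv, yv] at *
        grind
      choose! f hf using hex
      have hc := Finset.card_le_card_of_injOn (s := Finset.Icc 3 (s + 2)) f
        (fun j hj => (hf j hj).2) (by
          intro i hi j hj hij
          have e1 := (hf i hi).1
          have e2 := (hf j hj).1
          rw [hij] at e1
          have := hl _ _ _ e1 e2
          simpa [xv] using this)
      have c1 := Finset.card_image_le (s := Finset.Icc 3 (s - r + 2)) (f := xv)
      have c2 := Finset.card_image_le (s := (Finset.Icc 1 r).erase k) (f := yv)
      have c3 := Finset.card_union_le ((Finset.Icc 3 (s - r + 2)).image xv)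
        (((Finset.Icc 1 r).erase k).image yv)
      rw [Finset.card_erase_of_mem (by simpa using hk)] at c2
      simp only [Nat.card_Icc] at *
      omega
    refine ⟨{e | (uv e.2, yv e.1) ∈ M ∧ e ∈ E}, ⟨fun e he => he.2, ?_⟩, ?_⟩
    · rintro ⟨a, b⟩ ⟨he, -⟩ ⟨c, d⟩ ⟨hf, -⟩ hne
      refine ⟨?_, ?_⟩
      · rintro h
        simp only at h he hf
        subst h
        have := hrr _ _ _ he hf
        simp only [uv, Sum.inr.injEq, Sum.inl.injEq] at this
        exact hne (by rw [this])
      · rintro h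
        simp only at h he hf
        subst h
        have := hl _ _ _ he hf
        simp only [yv, Sum.inr.injEq] at this
        exact hne (by rw [this])
    · intro k hk
      obtain ⟨a, ha⟩ := hR (yv k) (Or.inr (Or.inr ⟨k, hk, rfl⟩))
      have hn := hkey k hk
      have := hsub ha
      simp only [edgesB, Set.mem_setOf_eq, Prod.mk.injEq, xv, uv, yv] at this ha hn ⊢
      grind
  · rintro ⟨M, ⟨hsub, hinj⟩, hL⟩
    have hl : ∀ a b c, (a, b) ∈ M → (a, c) ∈ M → b = c := by
      intro a b c h1 h2
      by_contra hne
      exact (hinj _ h1 _ h2 (by simpa using hne)).1 rfl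
    have hrr : ∀ a b c, (b, a) ∈ M → (c, a) ∈ M → b = c := by
      intro a b c h1 h2
      by_contra hne
      exact (hinj _ h1 _ h2 (by simpa using hne)).2 rfl
    have hb : ∀ a b, (a, b) ∈ M → 1 ≤ a ∧ a ≤ r ∧ 1 ≤ b ∧ b ≤ s := by
      intro a b h
      have := hE (hsub h)
      simp only [Set.mem_prod, Set.mem_Icc] at this
      omega
    refine ⟨{e | e = (xv 1, xv 2) ∨ e = (xv 2, xv 1) ∨
      (∃ i, 3 ≤ i ∧ i ≤ s - r + 2 ∧ e = (xv i, xv i)) ∨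
      (∃ i, 1 ≤ i ∧ i ≤ r ∧ e = (yv i, xv (s - r + 2 + i))) ∨
      (∃ i j, (j, i) ∈ M ∧ e = (uv i, yv j)) ∨
      (∃ i, 1 ≤ i ∧ i ≤ s ∧ (∀ j, (j, i) ∉ M) ∧ e = (uv i, uv i)) ∨
      (∃ i j, (j, i) ∈ M ∧ e = (xv (s - r + 2 + j), uv i))}, ⟨?_, ?_⟩, ?_, ?_⟩
    · intro e he
      simp only [Set.mem_setOf_eq] at he
      simp only [edgesB, Set.mem_setOf_eq, Set.mem_Icc]
      rcases he with rfl | rfl | ⟨i, h1, h2, rfl⟩ | ⟨i, h1, h2, rfl⟩ | ⟨i, j, h, rfl⟩ |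
        ⟨i, h1, h2, h, rfl⟩ | ⟨i, j, h, rfl⟩
      · exact Or.inr (Or.inl ⟨1, by omega, rfl⟩)
      · exact Or.inl ⟨1, by omega, rfl⟩
      · exact Or.inr (Or.inr (Or.inl ⟨i, by omega, i, by omega, rfl⟩))
      · exact Or.inr (Or.inr (Or.inr (Or.inr (Or.inl ⟨i, by omega, _, by omega, rfl⟩))))
      · exact Or.inr (Or.inr (Or.inr (Or.inr (Or.inr (Or.inl ⟨i, j, hsub h, rfl⟩)))))
      · exact Or.inr (Or.inr (Or.inr (Or.inr (Or.inr (Or.inr (Or.inl ⟨i, by omega, rfl⟩))))))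
      · have := hb _ _ h
        exact Or.inr (Or.inr (Or.inr (Or.inl ⟨_, by omega, i, by omega, rfl⟩)))
    · rintro ⟨a, b⟩ he ⟨c, d⟩ hf hne
      simp only [Set.mem_setOf_eq, Prod.mk.injEq, xv, uv, yv, ne_eq] at *
      rcases he with he | he | ⟨i, h1, h2, he⟩ | ⟨i, h1, h2, he⟩ | ⟨i, j, h, he⟩ |
        ⟨i, h1, h2, h, he⟩ | ⟨i, j, h, he⟩ <;> obtain ⟨rfl, rfl⟩ := he <;>
      rcases hf with hf | hf | ⟨i', h1', h2', hf⟩ | ⟨i', h1', h2', hf⟩ | ⟨i', j', h', hf⟩ |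
        ⟨i', h1', h2', h', hf⟩ | ⟨i', j', h', hf⟩ <;> obtain ⟨rfl, rfl⟩ := hf <;>
      simp only [Sum.inl.injEq, Sum.inr.injEq, reduceCtorEq, not_false_eq_true, and_true,
        true_and] at hne ⊢ <;> grind
    · rintro a (⟨i, hi, rfl⟩ | ⟨i, hi, rfl⟩ | ⟨i, hi, rfl⟩) <;> rw [Set.mem_Icc] at hi
      · by_cases h1 : i = 1
        · subst h1; exact ⟨xv 2, Or.inl rfl⟩
        by_cases h2 : i = 2
        · subst h2; exact ⟨xv 1, Or.inr (Or.inl rfl)⟩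
        by_cases h3 : i ≤ s - r + 2
        · exact ⟨xv i, Or.inr (Or.inr (Or.inl ⟨i, by omega, h3, rfl⟩))⟩
        · obtain ⟨b, hb'⟩ := hL (i - (s - r + 2)) (by rw [Set.mem_Icc]; omega)
          refine ⟨uv b, Or.inr (Or.inr (Or.inr (Or.inr (Or.inr (Or.inr ⟨b, _, hb', ?_⟩)))))⟩
          rw [show s - r + 2 + (i - (s - r + 2)) = i by omega]
      · by_cases h : ∃ j, (j, i) ∈ M
        · obtain ⟨j, h⟩ := h
          exact ⟨yv j, Or.inr (Or.inr (Or.inr (Or.inr (Or.inl ⟨i, j, h, rfl⟩))))⟩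
        · push Not at h
          exact ⟨uv i, Or.inr (Or.inr (Or.inr (Or.inr (Or.inr (Or.inl
            ⟨i, hi.1, hi.2, h, rfl⟩)))))⟩
      · exact ⟨_, Or.inr (Or.inr (Or.inr (Or.inl ⟨i, hi.1, hi.2, rfl⟩)))⟩
    · rintro a (⟨i, hi, rfl⟩ | ⟨i, hi, rfl⟩ | ⟨i, hi, rfl⟩) <;> rw [Set.mem_Icc] at hi
      · by_cases h1 : i = 1
        · subst h1; exact ⟨xv 2, Or.inr (Or.inl rfl)⟩
        by_cases h2 : i = 2
        · subst h2; exact ⟨xv 1, Or.inl rfl⟩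
        by_cases h3 : i ≤ s - r + 2
        · exact ⟨xv i, Or.inr (Or.inr (Or.inl ⟨i, by omega, h3, rfl⟩))⟩
        · refine ⟨yv (i - (s - r + 2)), Or.inr (Or.inr (Or.inr (Or.inl
            ⟨i - (s - r + 2), by omega, by omega, ?_⟩)))⟩
          rw [show s - r + 2 + (i - (s - r + 2)) = i by omega]
      · by_cases h : ∃ j, (j, i) ∈ M
        · obtain ⟨j, h⟩ := h
          exact ⟨_, Or.inr (Or.inr (Or.inr (Or.inr (Or.inr (Or.inr ⟨i, j, h, rfl⟩)))))⟩
        · push Not at h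
          exact ⟨uv i, Or.inr (Or.inr (Or.inr (Or.inr (Or.inr (Or.inl
            ⟨i, hi.1, hi.2, h, rfl⟩)))))⟩
      · obtain ⟨b, hb'⟩ := hL i hi
        exact ⟨uv b, Or.inr (Or.inr (Or.inr (Or.inr (Or.inl ⟨b, i, hb', rfl⟩))))⟩

end ResilientFeedback
end

section
/- For every positive integer γ, a set T ⊆ {1,…,r} is γ-resilient if and only if T is a multi-cover of U with demand γ+1, i.e., every element e ∈ U satisfies |{i ∈ T : e ∈ S_i}| ≥ γ+1. (Paper's Lemma 3, correctness of the reduction of Algorithm 4.) -/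
namespace ResilientFeedback

/-- Two vertices lie in the same strongly connected component: each is reachable
from the other by a directed path. -/
def SameSCC {V : Type} (adj : V → V → Prop) (a b : V) : Prop :=
  Relation.ReflTransGen adj a b ∧ Relation.ReflTransGen adj b a

/-- Edge relation of the closed-loop digraph `D_T` of the reduction: a self-loop
`x_j → x_j` for every `j ∈ {1,…,N}`; `u_1 → x_j` for every `j ∈ {1,…,N}`;
`x_j → y_i` whenever `i ∈ {1,…,r}` and `j ∈ S i`; and the feedback edges
`y_i → u_1` for every `i ∈ T`. -/
def adjD (N r : ℕ) (S : ℕ → Set ℕ) (T : Set ℕ) : V3 → V3 → Prop := fun a b =>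
  (∃ j ∈ Set.Icc 1 N, a = xv j ∧ b = xv j) ∨
  (∃ j ∈ Set.Icc 1 N, a = uv 1 ∧ b = xv j) ∨
  (∃ i ∈ Set.Icc 1 r, ∃ j ∈ S i, a = xv j ∧ b = yv i) ∨
  (∃ i ∈ T, a = yv i ∧ b = uv 1)

/-- `T` is `γ`-resilient: for every `I ⊆ T` with `|I| ≤ γ`, every state vertex
`x_j` lies in the same SCC of `D_{T∖I}` as both endpoints of some feedback edge
`y_i → u_1` with `i ∈ T∖I`. -/
def Resilient (N r : ℕ) (S : ℕ → Set ℕ) (γ : ℕ) (T : Set ℕ) : Prop :=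
  ∀ I ⊆ T, I.ncard ≤ γ → ∀ j ∈ Set.Icc 1 N,
    ∃ i ∈ T \ I, SameSCC (adjD N r S (T \ I)) (xv j) (yv i) ∧
                 SameSCC (adjD N r S (T \ I)) (xv j) (uv 1)

/-- `T` is a multi-cover of the universe `{1,…,N}` with demand `α`: every element
`e ∈ {1,…,N}` satisfies `|{i ∈ T : e ∈ S_i}| ≥ α`. -/
def MultiCover (N : ℕ) (S : ℕ → Set ℕ) (α : ℕ) (T : Set ℕ) : Prop :=
  ∀ e ∈ Set.Icc 1 N, α ≤ {i ∈ T | e ∈ S i}.ncard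


/-- paper's Lemma 3, correctness of the reduction of Algorithm 4.
For every positive integer `γ`, a set `T ⊆ {1,…,r}` is `γ`-resilient iff `T` is a
multi-cover of `U = {1,…,N}` with demand `γ + 1`. -/
theorem resilient_iff_multicover (N r : ℕ) (hN : 0 < N) (hr : 0 < r)
    (S : ℕ → Set ℕ) (hS : ∀ i ∈ Set.Icc 1 r, S i ⊆ Set.Icc 1 N)
    (hcov : ∀ e ∈ Set.Icc 1 N, ∃ i ∈ Set.Icc 1 r, e ∈ S i)
    (γ : ℕ) (hγ : 0 < γ) (T : Set ℕ) (hT : T ⊆ Set.Icc 1 r) :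
    Resilient N r S γ T ↔ MultiCover N S (γ + 1) T := by
  constructor
  · intro h e he
    by_contra hlt
    have hle : {i ∈ T | e ∈ S i}.ncard ≤ γ := by omega
    obtain ⟨i, -, -, hu, -⟩ := h {i ∈ T | e ∈ S i} (fun i hi => hi.1) hle e he
    have inv : ∀ v, Relation.ReflTransGen (adjD N r S (T \ {i ∈ T | e ∈ S i})) (xv e) v →
        v = xv e ∨ ∃ i, e ∈ S i ∧ v = yv i := by
      intro v hv
      induction hv with
      | refl => exact Or.inl rfl
      | tail _ hbc ih =>
        rcases hbc with ⟨j, _, rfl, rfl⟩ | ⟨j, _, rfl, rfl⟩ | ⟨k, _, j, hj, rfl, rfl⟩ |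
          ⟨k, hk, rfl, rfl⟩
        · exact ih
        · rcases ih with h1 | ⟨_, _, h1⟩ <;> simp [xv, uv, yv] at h1
        · rcases ih with h1 | ⟨_, _, h1⟩
          · simp only [xv, Sum.inl.injEq] at h1
            subst h1
            exact Or.inr ⟨k, hj, rfl⟩
          · simp [xv, yv] at h1
        · rcases ih with h1 | ⟨m, hm, h1⟩
          · simp [xv, yv] at h1
          · simp only [yv, Sum.inr.injEq] at h1
            subst h1
            exact absurd ⟨hk.1, hm⟩ hk.2
    rcases inv _ hu with h1 | ⟨_, _, h1⟩ <;> simp [xv, uv, yv] at h1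
  · intro h I hI hcard j hj
    have hIfin : I.Finite := (Set.finite_Icc 1 r).subset (hI.trans hT)
    have hc := h j hj
    obtain ⟨i, hi, hiI⟩ := Set.exists_mem_notMem_of_ncard_lt_ncard
      (show I.ncard < {i ∈ T | j ∈ S i}.ncard by omega) hIfin
    have e1 : adjD N r S (T \ I) (xv j) (yv i) :=
      Or.inr (Or.inr (Or.inl ⟨i, hT hi.1, j, hi.2, rfl, rfl⟩))
    have e2 : adjD N r S (T \ I) (yv i) (uv 1) :=
      Or.inr (Or.inr (Or.inr ⟨i, ⟨hi.1, hiI⟩, rfl, rfl⟩))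
    have e3 : adjD N r S (T \ I) (uv 1) (xv j) :=
      Or.inr (Or.inl ⟨j, hj, rfl, rfl⟩)
    exact ⟨i, ⟨hi.1, hiI⟩, ⟨.single e1, (Relation.ReflTransGen.single e2).tail e3⟩,
      ⟨(Relation.ReflTransGen.single e1).tail e2, .single e3⟩⟩

end ResilientFeedback
end

section
/- If T* ⊆ {1,…,r} is γ-resilient and has minimum cardinality among all γ-resilient subsets of {1,…,r}, then T* is a multi-cover of U with demand γ+1 and has minimum cardinality among all multi-covers of U with demand γ+1. (Paper's Theorem 2(i).) -/
namespace ResilientFeedback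

theorem Resilient.multiCover {N r : ℕ} {S : ℕ → Set ℕ} {γ : ℕ} {T : Set ℕ}
    (h : Resilient N r S γ T) : MultiCover N S (γ + 1) T := by
  intro e he
  by_contra hlt
  obtain ⟨_, _, _, h2, _⟩ := h {i ∈ T | e ∈ S i} (fun i hi => hi.1) (by omega) e he
  have key : ∀ b, Relation.ReflTransGen (adjD N r S (T \ {i ∈ T | e ∈ S i})) (xv e) b →
      b = xv e ∨ ∃ i, e ∈ S i ∧ b = yv i := by
    intro b hb
    induction hb with
    | refl => exact Or.inl rfl
    | tail _ hbc ih =>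
      rcases ih with rfl | ⟨i, hi, rfl⟩
      · rcases hbc with ⟨j, _, h1, h2⟩ | ⟨j, _, h1, _⟩ | ⟨i, _, j, hj, h1, h2⟩ | ⟨i, _, h1, _⟩
        · exact Or.inl (h2.trans h1.symm)
        · simp [xv, uv] at h1
        · obtain rfl : e = j := by simpa [xv] using h1
          exact Or.inr ⟨i, hj, h2⟩
        · simp [xv, yv] at h1
      · rcases hbc with ⟨j, _, h1, _⟩ | ⟨j, _, h1, _⟩ | ⟨_, _, j, _, h1, _⟩ | ⟨k, hk, h1, _⟩
        · simp [xv, yv] at h1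
        · simp [yv, uv] at h1
        · simp [xv, yv] at h1
        · obtain rfl : i = k := by simpa [yv] using h1
          exact absurd ⟨hk.1, hi⟩ hk.2
  rcases key _ h2 with h3 | ⟨i, _, h3⟩
  · simp [xv, uv] at h3
  · simp [yv, uv] at h3

theorem MultiCover.resilient {N r : ℕ} {S : ℕ → Set ℕ} {γ : ℕ} {T : Set ℕ}
    (hT : T ⊆ Set.Icc 1 r) (h : MultiCover N S (γ + 1) T) : Resilient N r S γ T := by
  intro I hI hc j hj
  have hfin : T.Finite := (Set.finite_Icc 1 r).subset hT
  obtain ⟨i, hi, hiI⟩ := Set.exists_mem_notMem_of_ncard_lt_ncard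
    (lt_of_le_of_lt hc (h j hj)) (hfin.subset hI)
  have e1 : adjD N r S (T \ I) (xv j) (yv i) :=
    Or.inr (Or.inr (Or.inl ⟨i, hT hi.1, j, hi.2, rfl, rfl⟩))
  have e2 : adjD N r S (T \ I) (yv i) (uv 1) :=
    Or.inr (Or.inr (Or.inr ⟨i, ⟨hi.1, hiI⟩, rfl, rfl⟩))
  have e3 : adjD N r S (T \ I) (uv 1) (xv j) := Or.inr (Or.inl ⟨j, hj, rfl, rfl⟩)
  exact ⟨i, ⟨hi.1, hiI⟩, ⟨.single e1, .tail (.single e2) e3⟩,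
    ⟨.tail (.single e1) e2, .single e3⟩⟩

/-- paper's Theorem 2(i).  If `T* ⊆ {1,…,r}` is `γ`-resilient and
has minimum cardinality among all `γ`-resilient subsets of `{1,…,r}`, then `T*` is
a multi-cover of `U` with demand `γ + 1` of minimum cardinality among all such
multi-covers. -/
theorem optimal_resilient_is_optimal_multicover (N r : ℕ) (hN : 0 < N) (hr : 0 < r)
    (S : ℕ → Set ℕ) (hS : ∀ i ∈ Set.Icc 1 r, S i ⊆ Set.Icc 1 N)
    (hcov : ∀ e ∈ Set.Icc 1 N, ∃ i ∈ Set.Icc 1 r, e ∈ S i)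
    (γ : ℕ) (hγ : 0 < γ)
    (Tstar : Set ℕ) (hTstar : Tstar ⊆ Set.Icc 1 r)
    (hres : Resilient N r S γ Tstar)
    (hmin : ∀ T ⊆ Set.Icc 1 r, Resilient N r S γ T → Tstar.ncard ≤ T.ncard) :
    MultiCover N S (γ + 1) Tstar ∧
    ∀ T ⊆ Set.Icc 1 r, MultiCover N S (γ + 1) T → Tstar.ncard ≤ T.ncard := by
  exact ⟨hres.multiCover, fun T hT h => hmin T hT (h.resilient hT)⟩

end ResilientFeedback
end

section
/- Let ε ≥ 1 be a real number and let T* be a γ-resilient subset of {1,…,r} of minimum cardinality. If T' ⊆ {1,…,r} is γ-resilient and |T'| ≤ ε·|T*|, then T' is a multi-cover of U with demand γ+1 and |T'| ≤ ε·c, where c is the minimum cardinality of a multi-cover of U with demand γ+1. (Paper's Theorem 3(i).) -/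
namespace ResilientFeedback

theorem multiCover_of_resilient (N r : ℕ) (S : ℕ → Set ℕ) (γ : ℕ) (T : Set ℕ)
    (h : Resilient N r S γ T) : MultiCover N S (γ + 1) T := by
  intro e he
  by_contra hlt
  obtain ⟨i, -, -, hu, -⟩ := h {i ∈ T | e ∈ S i} (fun i hi => hi.1) (by omega) e he
  have key : ∀ b, Relation.ReflTransGen (adjD N r S (T \ {i ∈ T | e ∈ S i})) (xv e) b →
      b = xv e ∨ ∃ i, e ∈ S i ∧ b = yv i := by
    intro b hb
    induction hb with
    | refl => exact Or.inl rfl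
    | tail _ hbc ih =>
      rcases ih with rfl | ⟨k, hk, rfl⟩
      · rcases hbc with ⟨j, _, h1, h2⟩ | ⟨j, _, h1, h2⟩ | ⟨i, _, j, hj, h1, h2⟩ | ⟨i, _, h1, h2⟩
        · left; rw [h2, h1]
        · simp [xv, uv] at h1
        · right
          have : e = j := by simpa [xv] using h1
          exact ⟨i, this ▸ hj, h2⟩
        · simp [xv, yv] at h1
      · rcases hbc with ⟨j, _, h1, h2⟩ | ⟨j, _, h1, h2⟩ | ⟨i, _, j, hj, h1, h2⟩ | ⟨i, hi, h1, h2⟩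
        · simp [xv, yv] at h1
        · simp [yv, uv] at h1
        · simp [xv, yv] at h1
        · have : k = i := by simpa [yv] using h1
          subst this
          exact absurd ⟨hi.1, hk⟩ hi.2
  rcases key _ hu with h1 | ⟨k, _, h1⟩
  · simp [xv, uv] at h1
  · simp [yv, uv] at h1

theorem resilient_of_multiCover (N r : ℕ) (S : ℕ → Set ℕ) (γ : ℕ) (T : Set ℕ)
    (hT : T ⊆ Set.Icc 1 r) (h : MultiCover N S (γ + 1) T) : Resilient N r S γ T := by
  intro I hI hc j hj
  have hIf : I.Finite := (Set.finite_Icc 1 r).subset (hI.trans hT)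
  have hj' := h j hj
  obtain ⟨i, hi, hiI⟩ := Set.exists_mem_notMem_of_ncard_lt_ncard
    (s := I) (t := {i ∈ T | j ∈ S i}) (by omega) hIf
  have e1 : adjD N r S (T \ I) (xv j) (yv i) :=
    Or.inr (Or.inr (Or.inl ⟨i, hT hi.1, j, hi.2, rfl, rfl⟩))
  have e2 : adjD N r S (T \ I) (yv i) (uv 1) :=
    Or.inr (Or.inr (Or.inr ⟨i, ⟨hi.1, hiI⟩, rfl, rfl⟩))
  have e3 : adjD N r S (T \ I) (uv 1) (xv j) := Or.inr (Or.inl ⟨j, hj, rfl, rfl⟩)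
  exact ⟨i, ⟨hi.1, hiI⟩, ⟨.single e1, .tail (.single e2) e3⟩,
    ⟨.tail (.single e1) e2, .single e3⟩⟩

/-- paper's Theorem 3(i).  Let `ε ≥ 1` and let `T*` be a
`γ`-resilient subset of `{1,…,r}` of minimum cardinality.  If `T' ⊆ {1,…,r}` is
`γ`-resilient and `|T'| ≤ ε·|T*|`, then `T'` is a multi-cover of `U` with demand
`γ + 1` and `|T'| ≤ ε·c`, where `c` is the minimum cardinality of a multi-cover of
`U` with demand `γ + 1`. -/
theorem approx_resilient_gives_approx_multicover (N r : ℕ) (hN : 0 < N) (hr : 0 < r)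
    (S : ℕ → Set ℕ) (hS : ∀ i ∈ Set.Icc 1 r, S i ⊆ Set.Icc 1 N)
    (hcov : ∀ e ∈ Set.Icc 1 N, ∃ i ∈ Set.Icc 1 r, e ∈ S i)
    (γ : ℕ) (hγ : 0 < γ) (ε : ℝ) (hε : 1 ≤ ε)
    (Tstar : Set ℕ) (hTstar : Tstar ⊆ Set.Icc 1 r)
    (hres : Resilient N r S γ Tstar)
    (hmin : ∀ T ⊆ Set.Icc 1 r, Resilient N r S γ T → Tstar.ncard ≤ T.ncard)
    (T' : Set ℕ) (hT' : T' ⊆ Set.Icc 1 r)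
    (hres' : Resilient N r S γ T')
    (hcard : (T'.ncard : ℝ) ≤ ε * Tstar.ncard)
    (c : ℕ)
    (hc : ∃ Tc ⊆ Set.Icc 1 r, MultiCover N S (γ + 1) Tc ∧ Tc.ncard = c)
    (hcmin : ∀ T ⊆ Set.Icc 1 r, MultiCover N S (γ + 1) T → c ≤ T.ncard) :
    MultiCover N S (γ + 1) T' ∧ (T'.ncard : ℝ) ≤ ε * c := by
  refine ⟨multiCover_of_resilient N r S γ T' hres', hcard.trans ?_⟩
  obtain ⟨Tc, hTc, hm, rfl⟩ := hc
  have := hmin Tc hTc (resilient_of_multiCover N r S γ Tc hTc hm)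
  have h2 : (Tstar.ncard : ℝ) ≤ Tc.ncard := by exact_mod_cast this
  exact mul_le_mul_of_nonneg_left h2 (by linarith)

end ResilientFeedback
end

section
/- Let M be a perfect matching of B that minimizes |M' ∩ S| over all perfect matchings M' of B, and set F = M ∩ S. Then B − T has a perfect matching for every T ⊆ S with |T| = 2 if and only if both of the following hold: (a) B − T has a perfect matching for every two-element subset T ⊆ F, and (b) B − {f, e} has a perfect matching for every f ∈ F and every e ∈ S ∖ F. (Correctness of Algorithm 3, the matching part of the paper's Theorem 6.) -/
namespace ResilientFeedback

/-- A perfect matching of the bipartite graph `B = (V, Ṽ, Ed)` with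
`|V| = |Ṽ|` (here `V`, `Ṽ` are the whole types `α`, `β`): a matching of size
`|V|`, i.e. one covering every vertex on both sides. -/
def IsPerfectMatching {α β : Type} (Ed M : Set (α × β)) : Prop :=
  IsMatching Ed M ∧ (∀ a : α, ∃ b, (a, b) ∈ M) ∧ (∀ b : β, ∃ a, (a, b) ∈ M)


/-- correctness of Algorithm 3; matching part of the paper's
Theorem 6.  Let `M` be a perfect matching of `B` minimizing `|M' ∩ S|` over all
perfect matchings `M'` of `B`, and set `F = M ∩ S`.  Then `B − T` has a perfect
matching for every `T ⊆ S` with `|T| = 2` iff (a) `B − T` has a perfect matching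
for every two-element `T ⊆ F`, and (b) `B − {f, e}` has a perfect matching for
every `f ∈ F` and `e ∈ S ∖ F`. -/
theorem two_edge_resilience_check {α β : Type} [Fintype α] [Fintype β]
    (hcard : Fintype.card α = Fintype.card β)
    (Ed S : Set (α × β)) (hS : S ⊆ Ed)
    (M : Set (α × β)) (hM : IsPerfectMatching Ed M)
    (hmin : ∀ M', IsPerfectMatching Ed M' → (M ∩ S).ncard ≤ (M' ∩ S).ncard)
    (F : Set (α × β)) (hF : F = M ∩ S) :
    (∀ T ⊆ S, T.ncard = 2 → ∃ M', IsPerfectMatching (Ed \ T) M') ↔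
    ((∀ T ⊆ F, T.ncard = 2 → ∃ M', IsPerfectMatching (Ed \ T) M') ∧
     (∀ f ∈ F, ∀ e ∈ S \ F, ∃ M', IsPerfectMatching (Ed \ {f, e}) M')) := by
  constructor
  · intro h
    refine ⟨fun T hT h2 => h T (fun x hx => ?_) h2, fun f hf e he => h _ ?_ ?_⟩
    · have := hT hx
      rw [hF] at this
      exact this.2
    · rintro x (rfl | rfl)
      · rw [hF] at hf
        exact hf.2
      · exact he.1
    · exact Set.ncard_pair (fun hfe => he.2 (hfe ▸ hf))
  · rintro ⟨ha, hb⟩ T hT h2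
    obtain ⟨x, y, hxy, rfl⟩ := Set.ncard_eq_two.mp h2
    have hxS : x ∈ S := hT (Or.inl rfl)
    have hyS : y ∈ S := hT (Or.inr rfl)
    by_cases hx : x ∈ F
    · by_cases hy : y ∈ F
      · refine ha _ ?_ h2
        rintro z (rfl | rfl)
        · exact hx
        · exact hy
      · exact hb x hx y ⟨hyS, hy⟩
    · by_cases hy : y ∈ F
      · rw [Set.pair_comm]
        exact hb y hy x ⟨hxS, hx⟩
      · refine ⟨M, ⟨fun z hz => ⟨hM.1.1 hz, ?_⟩, hM.1.2⟩, hM.2⟩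
        rintro (rfl | rfl)
        · exact hx (hF ▸ ⟨hz, hxS⟩)
        · exact hy (hF ▸ ⟨hz, hyS⟩)

end ResilientFeedback
end
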